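/- arXiv:1904.08561 — 2 statements merged into one kernel-verified Lean document; each statement's English description precedes it below -/
import Mathlib

section
/- Let n ≥ 0 and r ≥ 1 be integers and set m = n + r − 1. Let h : ℤ × ℤ → ℝ satisfy h(p,q) = 0 whenever p < 0, p > n, q < 0, or q > n, and let b : ℤ → ℝ. Define S(k) = ∑_{p=0}^{n} h(p, k − p) and Δ(k) = S(k) + S(2n − k) − 2·b(k). Define h̃(p,q) = ∑_{i=0}^{r-1} h(p − i, q − i), b̃(k) = ∑_{i=0}^{r-1} b(k − 2i), S̃(k) = ∑_{p=0}^{m} h̃(p, k − p), and Δ̃(k) = S̃(k) + S̃(2m − k) − 2·b̃(k). Then for every k ∈ ℤ, Δ̃(k) = ∑_{i=0}^{r-1} Δ(k − 2i). -/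
/-!
Summing `h̃` along the antidiagonal of degree `k` and exchanging the two sums, the `i`-th summand is
`h` summed along the antidiagonal of degree `k - 2i`, with `p` shifted by `i`; the range of `p` is
long enough to contain the shifted support. Hence `S̃ k = ∑ i, S (k - 2i)`. In the complementary
degree `2m - k`, where `m = n + r - 1`, the substitution `i ↦ r - 1 - i` turns `2m - k - 2i` into
`2n - (k - 2i)`, so the two halves of `Δ̃ k` match term by term.
-/

open Finset

section RangeSums

variable {M : Type*} [AddCommMonoid M]

theorem sum_range_sub_natCast_of_eq_zero {f : ℤ → M} {i a b : ℕ} (hab : i + a ≤ b)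
    (hf : ∀ p : ℤ, p < 0 ∨ a ≤ p → f p = 0) :
    ∑ p ∈ range b, f (p - i) = ∑ p ∈ range a, f p := by
  obtain ⟨c, rfl⟩ := Nat.exists_eq_add_of_le hab
  have below : ∑ p ∈ range i, f (p - i) = 0 :=
    sum_eq_zero fun p hp ↦ hf _ (.inl (by have := mem_range.mp hp; omega))
  have above : ∑ p ∈ range c, f ((i + a + p : ℕ) - i) = 0 :=
    sum_eq_zero fun p _ ↦ hf _ (.inr (by omega))
  rw [sum_range_add, sum_range_add, below, above, zero_add, add_zero]
  simp only [Nat.cast_add, add_sub_cancel_left]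

theorem sum_range_intCast_reflect (f : ℤ → M) (r : ℕ) :
    ∑ i ∈ range r, f (r - 1 - i) = ∑ i ∈ range r, f i := by
  rw [← sum_range_reflect (fun i : ℕ ↦ f i)]
  refine sum_congr rfl fun i hi ↦ congrArg f ?_
  have := mem_range.mp hi
  omega

end RangeSums

section Degrees

variable {M : Type*}

/-- The total Bott–Chern number `S k = ∑_{p + q = k} h (p, q)` in degree `k`. The sum runs over
`0 ≤ p ≤ n`, which is all of the antidiagonal when `h` is supported in those columns. -/
def totalBottChern [AddCommMonoid M] (n : ℕ) (h : ℤ × ℤ → M) (k : ℤ) : M :=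
  ∑ p ∈ range (n + 1), h (p, k - p)

/-- The non-Kählerness degree `Δ k` of an `n`-dimensional manifold with Bott–Chern numbers `h` and
Betti numbers `b`. -/
def nonKahlernessDegree [AddCommGroup M] (n : ℕ) (h : ℤ × ℤ → M) (b : ℤ → M) (k : ℤ) : M :=
  totalBottChern n h k + totalBottChern n h (2 * n - k) - 2 • b k

/-- The Bott–Chern numbers `h̃` of the projectivization of a rank-`r` bundle over a base with
Bott–Chern numbers `h`, as given by the projective bundle formula. -/
def projectiveBundleBottChern [AddCommMonoid M] (r : ℕ) (h : ℤ × ℤ → M) (x : ℤ × ℤ) : M :=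
  ∑ i ∈ range r, h (x.1 - i, x.2 - i)

/-- The Betti numbers `b̃` of the projectivization of a rank-`r` bundle over a base with Betti
numbers `b`, as given by the projective bundle formula. -/
def projectiveBundleBetti [AddCommMonoid M] (r : ℕ) (b : ℤ → M) (k : ℤ) : M :=
  ∑ i ∈ range r, b (k - 2 * i)

theorem totalBottChern_projectiveBundleBottChern [AddCommMonoid M] {n r m : ℕ} (hm : n + r ≤ m + 1)
    {h : ℤ × ℤ → M} (hvan : ∀ p q : ℤ, p < 0 ∨ n < p → h (p, q) = 0) (k : ℤ) :
    totalBottChern m (projectiveBundleBottChern r h) k =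
      ∑ i ∈ range r, totalBottChern n h (k - 2 * i) := by
  unfold totalBottChern projectiveBundleBottChern
  rw [sum_comm]
  refine sum_congr rfl fun i hi ↦ ?_
  have hi : i < r := mem_range.mp hi
  calc ∑ p ∈ range (m + 1), h (p - i, k - p - i)
      = ∑ p ∈ range (m + 1), h (p - i, k - 2 * i - (p - i)) :=
        sum_congr rfl fun p _ ↦ by congr 2; ring
    _ = ∑ p ∈ range (n + 1), h (p, k - 2 * i - p) :=
        sum_range_sub_natCast_of_eq_zero (f := fun p ↦ h (p, k - 2 * i - p)) (by omega)
          fun p hp ↦ hvan _ _ (by omega)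

theorem sum_range_complementary_degree [AddCommMonoid M] {n r m : ℕ} (hm : m + 1 = n + r)
    (f : ℤ → M) (k : ℤ) :
    ∑ i ∈ range r, f (2 * m - k - 2 * i) = ∑ i ∈ range r, f (2 * n - (k - 2 * i)) := by
  rw [← sum_range_intCast_reflect (fun i ↦ f (2 * n - (k - 2 * i)))]
  exact sum_congr rfl fun i _ ↦ congrArg f (by omega)

theorem projective_bundle_nonKahlerness_formula_general [AddCommGroup M] {n r m : ℕ}
    (hm : m + 1 = n + r) {h : ℤ × ℤ → M} (hvan : ∀ p q : ℤ, p < 0 ∨ n < p → h (p, q) = 0)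
    (b : ℤ → M) (k : ℤ) :
    nonKahlernessDegree m (projectiveBundleBottChern r h) (projectiveBundleBetti r b) k =
      ∑ i ∈ range r, nonKahlernessDegree n h b (k - 2 * i) := by
  simp only [nonKahlernessDegree, projectiveBundleBetti, sum_sub_distrib, sum_add_distrib,
    ← smul_sum, totalBottChern_projectiveBundleBottChern hm.ge hvan,
    sum_range_complementary_degree hm]

end Degrees

theorem projective_bundle_nonKahlerness_formula
    (n r : ℕ) (hr : 1 ≤ r) (m : ℕ) (hm : m = n + r - 1)
    (h : ℤ × ℤ → ℝ)
    (hvan : ∀ p q : ℤ, (p < 0 ∨ p > (n : ℤ) ∨ q < 0 ∨ q > (n : ℤ)) → h (p, q) = 0)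
    (b : ℤ → ℝ)
    (S : ℤ → ℝ) (hS : ∀ k : ℤ, S k = ∑ p ∈ Finset.range (n + 1), h ((p : ℤ), k - (p : ℤ)))
    (Δ : ℤ → ℝ) (hΔ : ∀ k : ℤ, Δ k = S k + S (2 * (n : ℤ) - k) - 2 * b k)
    (ht : ℤ × ℤ → ℝ)
    (hht : ∀ p q : ℤ, ht (p, q) = ∑ i ∈ Finset.range r, h (p - (i : ℤ), q - (i : ℤ)))
    (bt : ℤ → ℝ) (hbt : ∀ k : ℤ, bt k = ∑ i ∈ Finset.range r, b (k - 2 * (i : ℤ)))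
    (St : ℤ → ℝ) (hSt : ∀ k : ℤ, St k = ∑ p ∈ Finset.range (m + 1), ht ((p : ℤ), k - (p : ℤ)))
    (Δt : ℤ → ℝ) (hΔt : ∀ k : ℤ, Δt k = St k + St (2 * (m : ℤ) - k) - 2 * bt k) :
    ∀ k : ℤ, Δt k = ∑ i ∈ Finset.range r, Δ (k - 2 * (i : ℤ)) := by
  simpa only [hΔt, hSt, hht, hbt, hΔ, hS, nonKahlernessDegree, totalBottChern,
    projectiveBundleBottChern, projectiveBundleBetti, two_nsmul, two_mul] using
    projective_bundle_nonKahlerness_formula_general (by omega : m + 1 = n + r)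
      (fun p q hp ↦ hvan p q (by omega)) b
end

section
/- Let n ≥ 0 and r ≥ 1 be integers and set m = n + r − 1. Let h : ℤ × ℤ → ℝ satisfy h(p,q) = 0 whenever p < 0, p > n, q < 0, or q > n, and let b : ℤ → ℝ. Define S(k) = ∑_{p=0}^{n} h(p, k − p) and Δ(k) = S(k) + S(2n − k) − 2·b(k), and assume Δ(k) ≥ 0 for all k ∈ ℤ. Define h̃(p,q) = ∑_{i=0}^{r-1} h(p − i, q − i), b̃(k) = ∑_{i=0}^{r-1} b(k − 2i), S̃(k) = ∑_{p=0}^{m} h̃(p, k − p), and Δ̃(k) = S̃(k) + S̃(2m − k) − 2·b̃(k). Then Δ̃(k) = 0 for all k ∈ ℤ if and only if Δ(k) = 0 for all k ∈ ℤ. -/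
/-!
Summing the Bott-Chern numbers of `P(E)` along a diagonal gives
`S̃(k) = ∑ i < r, S(k - 2i)`, because each shifted copy of `h` still lies inside the larger range of
summation. Since `2m = 2n + 2(r - 1)`, reversing the order of summation turns `S̃(2m - k)` into
`∑ i < r, S(2n - (k - 2i))`. Hence `Δ̃(k) = ∑ i < r, Δ(k - 2i)`, a sum of nonnegative terms that
contains `Δ(k)`.
-/

open Finset

/-- The sum of the `r` translates of `f` by `0, a, …, (r - 1) • a`. The cohomology of the
projectivization of a rank `r` bundle has this shape: its Bott-Chern numbers arise from `a = (1, 1)`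
and its Betti numbers from `a = 2`, the bidegree and the degree of the tautological class. -/
def translateSum {G M : Type*} [AddGroup G] [AddCommMonoid M] (r : ℕ) (a : G) (f : G → M) (x : G) :
    M :=
  ∑ i ∈ range r, f (x - i • a)

/-- The total `∑_{p + q = k} h (p, q)` of the numbers of degree `k` on an `n`-dimensional manifold.
Only `p` is restricted to `0, …, n`; `q = k - p` may be any integer. -/
def diagonalSum {M : Type*} [AddCommMonoid M] (n : ℕ) (h : ℤ × ℤ → M) (k : ℤ) : M :=
  ∑ p ∈ range (n + 1), h (p, k - p)

/-- The Angella–Tomassini non-Kählerness degree `Δ^k` of an `n`-dimensional manifold with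
Bott-Chern numbers `h` and Betti numbers `b`. -/
def nonKahlerDegree {M : Type*} [AddCommGroup M] (n : ℕ) (h : ℤ × ℤ → M) (b : ℤ → M) (k : ℤ) : M :=
  diagonalSum n h k + diagonalSum n h (2 * n - k) - 2 • b k

theorem translateSum_reflect {G M : Type*} [AddCommGroup G] [AddCommMonoid M]
    (r : ℕ) (a c : G) (f : G → M) (x : G) :
    translateSum r a f (c + ((r : ℤ) - 1) • a - x) = translateSum r a (fun y ↦ f (c - y)) x := by
  unfold translateSum
  rw [← sum_range_reflect]
  refine sum_congr rfl fun i hi ↦ congrArg f ?_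
  have hcast : ((r - 1 - i : ℕ) : ℤ) = r - 1 - i := by have := mem_range.mp hi; omega
  rw [← natCast_zsmul a (r - 1 - i), hcast, ← natCast_zsmul a i]
  module

theorem forall_translateSum_eq_zero_iff {G M : Type*} [AddGroup G] [AddCommMonoid M]
    [PartialOrder M] [IsOrderedAddMonoid M] {r : ℕ} (hr : r ≠ 0) (a : G) {f : G → M}
    (hf : ∀ x, 0 ≤ f x) :
    (∀ x, translateSum r a f x = 0) ↔ ∀ x, f x = 0 := by
  refine ⟨fun hsum x ↦ ?_, fun hzero x ↦ sum_eq_zero fun i _ ↦ hzero _⟩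
  have hterms := (sum_eq_zero_iff_of_nonneg fun i _ ↦ hf (x - i • a)).mp (hsum x)
  simpa using hterms 0 (mem_range.mpr (Nat.pos_of_ne_zero hr))

theorem sum_range_comp_sub_of_eq_zero {M : Type*} [AddCommMonoid M] {n m i : ℕ}
    (him : n + i ≤ m) {f : ℤ → M} (hf : ∀ p : ℤ, p < 0 ∨ n < p → f p = 0) :
    ∑ p ∈ range (m + 1), f (p - i) = ∑ p ∈ range (n + 1), f p := by
  symm
  refine sum_of_injOn (· + i) (add_left_injective i).injOn ?_ ?_ fun p _ ↦ by simp
  · intro p hp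
    simp only [coe_range, Set.mem_Iio] at hp ⊢
    omega
  · intro p _ hp
    refine hf _ ?_
    by_contra! hmem
    exact hp ⟨p - i, by simp only [coe_range, Set.mem_Iio]; omega, by dsimp only; omega⟩

theorem diagonalSum_translateSum {M : Type*} [AddCommMonoid M] {n r m : ℕ} (hm : n + r ≤ m + 1)
    {h : ℤ × ℤ → M} (hh : ∀ p q : ℤ, p < 0 ∨ n < p → h (p, q) = 0) (k : ℤ) :
    diagonalSum m (translateSum r (1, 1) h) k = translateSum r 2 (diagonalSum n h) k := by
  simp only [diagonalSum, translateSum]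
  rw [sum_comm]
  refine sum_congr rfl fun i hi ↦ ?_
  have him : n + i ≤ m := by have := mem_range.mp hi; omega
  rw [← sum_range_comp_sub_of_eq_zero him (f := fun p ↦ h (p, k - i • 2 - p))
    fun p hp ↦ hh p _ hp]
  refine sum_congr rfl fun p _ ↦ congrArg h (Prod.ext ?_ ?_)
  · simp
  · simp only [Prod.snd_sub, Prod.smul_snd]
    ring

theorem nonKahlerDegree_translateSum {M : Type*} [AddCommGroup M] {n r m : ℕ}
    (hm : m + 1 = n + r) {h : ℤ × ℤ → M} (hh : ∀ p q : ℤ, p < 0 ∨ n < p → h (p, q) = 0)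
    (b : ℤ → M) (k : ℤ) :
    nonKahlerDegree m (translateSum r (1, 1) h) (translateSum r 2 b) k =
      translateSum r 2 (nonKahlerDegree n h b) k := by
  have hdual : 2 * (m : ℤ) - k = 2 * n + ((r : ℤ) - 1) • 2 - k := by
    rw [smul_eq_mul]
    omega
  rw [nonKahlerDegree, diagonalSum_translateSum hm.ge hh, diagonalSum_translateSum hm.ge hh, hdual,
    translateSum_reflect]
  simp only [translateSum, nonKahlerDegree, sum_sub_distrib, sum_add_distrib, smul_sum]

theorem projective_bundle_lemma_numerical_general {M : Type*} [AddCommGroup M] [PartialOrder M]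
    [IsOrderedAddMonoid M] {n r m : ℕ} (hr : r ≠ 0) (hm : m + 1 = n + r) {h : ℤ × ℤ → M}
    (hh : ∀ p q : ℤ, p < 0 ∨ n < p → h (p, q) = 0) {b : ℤ → M}
    (hnonneg : ∀ k, 0 ≤ nonKahlerDegree n h b k) :
    (∀ k, nonKahlerDegree m (translateSum r (1, 1) h) (translateSum r 2 b) k = 0) ↔
      ∀ k, nonKahlerDegree n h b k = 0 := by
  simp only [nonKahlerDegree_translateSum hm hh]
  exact forall_translateSum_eq_zero_iff hr 2 hnonneg

theorem projective_bundle_lemma_numerical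
    (n r : ℕ) (hr : 1 ≤ r) (m : ℕ) (hm : m = n + r - 1)
    (h : ℤ × ℤ → ℝ)
    (hvan : ∀ p q : ℤ, (p < 0 ∨ p > (n : ℤ) ∨ q < 0 ∨ q > (n : ℤ)) → h (p, q) = 0)
    (b : ℤ → ℝ)
    (S : ℤ → ℝ) (hS : ∀ k : ℤ, S k = ∑ p ∈ Finset.range (n + 1), h ((p : ℤ), k - (p : ℤ)))
    (Δ : ℤ → ℝ) (hΔ : ∀ k : ℤ, Δ k = S k + S (2 * (n : ℤ) - k) - 2 * b k)
    (hΔnonneg : ∀ k : ℤ, 0 ≤ Δ k)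
    (ht : ℤ × ℤ → ℝ)
    (hht : ∀ p q : ℤ, ht (p, q) = ∑ i ∈ Finset.range r, h (p - (i : ℤ), q - (i : ℤ)))
    (bt : ℤ → ℝ) (hbt : ∀ k : ℤ, bt k = ∑ i ∈ Finset.range r, b (k - 2 * (i : ℤ)))
    (St : ℤ → ℝ) (hSt : ∀ k : ℤ, St k = ∑ p ∈ Finset.range (m + 1), ht ((p : ℤ), k - (p : ℤ)))
    (Δt : ℤ → ℝ) (hΔt : ∀ k : ℤ, Δt k = St k + St (2 * (m : ℤ) - k) - 2 * bt k) :
    (∀ k : ℤ, Δt k = 0) ↔ (∀ k : ℤ, Δ k = 0) := by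
  obtain rfl : ht = translateSum r (1, 1) h := funext fun ⟨p, q⟩ ↦ by simp [hht, translateSum]
  obtain rfl : bt = translateSum r 2 b := funext fun k ↦ by simp [hbt, translateSum, mul_comm]
  obtain rfl : Δ = nonKahlerDegree n h b :=
    funext fun k ↦ by simp [hΔ, hS, nonKahlerDegree, diagonalSum]
  obtain rfl : Δt = nonKahlerDegree m (translateSum r (1, 1) h) (translateSum r 2 b) :=
    funext fun k ↦ by simp [hΔt, hSt, nonKahlerDegree, diagonalSum]
  exact projective_bundle_lemma_numerical_general (by omega) (by omega)
    (fun p q hp ↦ hvan p q (by omega)) hΔnonneg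
end
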